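/- arXiv:1202.0211 — 2 statements merged into one kernel-verified Lean document; each statement's English description precedes it below -/
import Mathlib

section
/- Let ω be a 2-adic integer. The sequence j ↦ (ω + 2^j choose 2^{j+1})₂ is ultimately equal to 0 (i.e., vanishes for all sufficiently large j) if and only if ω is a rational integer, i.e., ω lies in the image of ℤ in ℤ₂. -/
/-!
The binomial coefficient `(η choose 2^(j+1))₂` is the digit `d_{j+1}(η)`, so it vanishes exactly
when the residue of `η` modulo `2^(j+2)` lies in `[0, 2^(j+1))`. For `η = ω + 2^j` this says that
`ω` is congruent modulo `2^(j+2)` to an integer `b` of the interval `[-2^j, 2^j)`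
(`binom2_eq_zero_iff`).

An integer `ω` satisfies this, with `b = ω`, as soon as `2^j > |ω|`. Conversely, if it holds for
all `j ≥ N` with integers `b_j`, then `b_{j+1} - b_j` is divisible by `2^(j+2)` and has absolute
value below `2^(j+1) + 2^j`, so it is `0`. The sequence `b_j` is thus constant from `N` on, and `ω`
is congruent to its value modulo every power of `2`, hence equal to it.
-/

/-- The `j`-th binary digit `d_j(ω)` of a 2-adic integer `ω`: the `j`-th
binary digit of the canonical approximation of `ω` modulo `2^(j+1)`, so that
`ω ≡ Σ_{i ≤ j} d_i(ω)·2^i (mod 2^{j+1})` for all `j`. -/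
noncomputable def padicDigit (ω : ℤ_[2]) (j : ℕ) : ℕ :=
  if (ω.appr (j + 1)).testBit j then 1 else 0

/-- The generalized binomial coefficient `(ω choose k)₂ = Π_{i≥0} C(d_i(ω), k_i)`
for `ω ∈ ℤ₂` and `k ∈ ℕ` with binary digits `k_i`; it equals `1` if `k_i ≤ d_i(ω)`
for all `i`, and `0` otherwise.  (All binary digits of `k` with index `> k`
vanish, so the product may be truncated at `i = k`.) -/
noncomputable def binom2 (ω : ℤ_[2]) (k : ℕ) : ℕ :=
  ∏ i ∈ Finset.range (k + 1),
    Nat.choose (padicDigit ω i) (if k.testBit i then 1 else 0)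

theorem binom2_two_pow (η : ℤ_[2]) (k : ℕ) : binom2 η (2 ^ k) = padicDigit η k := by
  unfold binom2
  rw [Finset.prod_eq_single k]
  · simp
  · intro i _ hik
    simp [Ne.symm hik]
  · intro h
    exact absurd (Finset.mem_range.2 (Nat.lt_succ_of_lt Nat.lt_two_pow_self)) h

theorem padicDigit_eq_zero_iff (η : ℤ_[2]) (k : ℕ) :
    padicDigit η k = 0 ↔ η.appr (k + 1) < 2 ^ k := by
  have hlt := PadicInt.appr_lt η (k + 1)
  have hp := pow_succ 2 k
  unfold padicDigit
  constructor
  · intro h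
    by_contra! hge
    have : (η.appr (k + 1)).testBit k = true := by
      rw [Nat.testBit_eq_decide_div_mod_eq]
      have : η.appr (k + 1) / 2 ^ k = 1 := by
        apply Nat.div_eq_of_lt_le <;> omega
      simp [this]
    simp [this] at h
  · intro h
    simp [Nat.testBit_lt_two_pow h]

theorem int_two_pow_dvd (n : ℕ) (z : ℤ) (h : (2 : ℤ_[2]) ^ n ∣ (z : ℤ_[2])) :
    (2 : ℤ) ^ n ∣ z := by
  have := (PadicInt.pow_p_dvd_int_iff (p := 2) n z).1 (by exact_mod_cast h)
  exact_mod_cast this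

theorem int_eq_of_dvd_sub {m a b : ℤ} (h : m ∣ a - b) (h1 : a - b < m) (h2 : b - a < m) :
    a = b := by
  have := Int.eq_zero_of_abs_lt_dvd h (abs_lt.2 ⟨by linarith, h1⟩)
  linarith

theorem binom2_eq_zero_iff (ω : ℤ_[2]) (j : ℕ) :
    binom2 (ω + 2 ^ j) (2 ^ (j + 1)) = 0 ↔
      ∃ b : ℤ, -2 ^ j ≤ b ∧ b < 2 ^ j ∧ (2 : ℤ_[2]) ^ (j + 2) ∣ ω - b := by
  rw [binom2_two_pow, padicDigit_eq_zero_iff]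
  have hlt := PadicInt.appr_lt (ω + 2 ^ j) (j + 1 + 1)
  have hdvd := Ideal.mem_span_singleton.1 (PadicInt.appr_spec (j + 1 + 1) (ω + 2 ^ j))
  generalize (ω + 2 ^ j).appr (j + 1 + 1) = B at *
  replace hlt : (B : ℤ) < 2 ^ (j + 2) := by exact_mod_cast hlt
  replace hdvd : (2 : ℤ_[2]) ^ (j + 2) ∣ ω + 2 ^ j - B := by exact_mod_cast hdvd
  have hp1 := pow_succ (2 : ℤ) j
  have hp2 := pow_succ (2 : ℤ) (j + 1)
  have hpos : (0 : ℤ) < 2 ^ j := by positivity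
  constructor
  · intro h
    have h' : (B : ℤ) < 2 ^ (j + 1) := by exact_mod_cast h
    refine ⟨B - 2 ^ j, by linarith [Int.natCast_nonneg B], by linarith, ?_⟩
    convert hdvd using 1
    push_cast
    ring
  · rintro ⟨b, hb1, hb2, hb⟩
    have hd := int_two_pow_dvd (j + 2) (B - (b + 2 ^ j)) (by
      convert dvd_sub hb hdvd using 1
      push_cast
      ring)
    have := int_eq_of_dvd_sub hd (by linarith) (by linarith [Int.natCast_nonneg B])
    have h' : (B : ℤ) < 2 ^ (j + 1) := by linarith
    exact_mod_cast h'

/-- The sequence `j ↦ (ω + 2^j choose 2^{j+1})₂` is ultimately `0` if and only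
if `ω` is a rational integer, i.e. lies in the image of `ℤ` in `ℤ₂`. -/
theorem binom2_seq_ultimately_zero_iff_integer (ω : ℤ_[2]) :
    (∃ N : ℕ, ∀ j : ℕ, N ≤ j → binom2 (ω + 2 ^ j) (2 ^ (j + 1)) = 0)
      ↔ ∃ a : ℤ, ω = (a : ℤ_[2]) := by
  simp only [binom2_eq_zero_iff]
  constructor
  · rintro ⟨N, hN⟩
    obtain ⟨b, hb1, hb2, hb⟩ := hN N le_rfl
    have key : ∀ j, N ≤ j → -2 ^ j ≤ b ∧ b < 2 ^ j ∧ (2 : ℤ_[2]) ^ (j + 2) ∣ ω - b := by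
      intro j hj
      induction j, hj using Nat.le_induction with
      | base => exact ⟨hb1, hb2, hb⟩
      | succ j hj ih =>
        obtain ⟨h1, h2, h3⟩ := ih
        obtain ⟨c, hc1, hc2, hc⟩ := hN (j + 1) (by omega)
        have hp1 := pow_succ (2 : ℤ) j
        have hp2 := pow_succ (2 : ℤ) (j + 1)
        have hpos : (0 : ℤ) < 2 ^ j := by positivity
        have hd := int_two_pow_dvd (j + 2) (c - b) (by
          convert dvd_sub h3 ((pow_dvd_pow 2 (by omega)).trans hc) using 1
          push_cast
          ring)
        obtain rfl := int_eq_of_dvd_sub hd (by linarith) (by linarith)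
        exact ⟨hc1, hc2, hc⟩
    refine ⟨b, PadicInt.ext_of_toZModPow.1 fun n => ?_⟩
    rw [← sub_eq_zero, ← map_sub, ← RingHom.mem_ker, PadicInt.ker_toZModPow,
      Ideal.mem_span_singleton]
    have := (pow_dvd_pow (2 : ℤ_[2]) (show n ≤ max N n + 2 by omega)).trans
      (key (max N n) (le_max_left _ _)).2.2
    exact_mod_cast this
  · rintro ⟨a, rfl⟩
    refine ⟨a.natAbs, fun j hj => ⟨a, ?_⟩⟩
    have h : (a.natAbs : ℤ) < 2 ^ j := by
      exact_mod_cast hj.trans_lt Nat.lt_two_pow_self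
    refine ⟨by omega, by omega, by simp⟩
end

section
/- Let ω ≠ -1 be a 2-adic integer, and write ω = 2^ℓ - 1 + 2^{ℓ+1}·ω' where ℓ ≥ 0 is the number of leading 1's in the binary expansion of ω and ω' ∈ ℤ₂. Set f_ω(k) = (ω + k + 1 choose 2k+1)₂. Then for every natural number k', f_ω(2^ℓ - 1 + 2^{ℓ+1}·k') = (ω' + k' choose 2k')₂. -/
/-- The approximation `appr x n` is the only natural number below `2 ^ n` congruent to `x`
modulo `2 ^ n`. -/
lemma appr_eq_of_sub_mem (x : ℤ_[2]) (n a : ℕ) (ha : a < 2 ^ n)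
    (hx : x - (a : ℤ_[2]) ∈ (Ideal.span {((2 : ℕ) : ℤ_[2]) ^ n} : Ideal ℤ_[2])) :
    x.appr n = a := by
  have h1 := PadicInt.appr_spec n x
  have h2 := PadicInt.appr_lt x n
  have h3 := PadicInt.zmod_congr_of_sub_mem_span n x (x.appr n) a (by exact_mod_cast h1) hx
  have h4 := (ZMod.natCast_eq_natCast_iff' _ _ _).1 h3
  rwa [Nat.mod_eq_of_lt h2, Nat.mod_eq_of_lt ha] at h4

lemma appr_one_add_two_mul (x : ℤ_[2]) (n : ℕ) :
    (1 + 2 * x).appr (n + 1) = 1 + 2 * x.appr n := by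
  apply appr_eq_of_sub_mem
  · have := PadicInt.appr_lt x n
    rw [pow_succ]
    omega
  · have h := PadicInt.appr_spec n x
    rw [Ideal.mem_span_singleton] at h ⊢
    obtain ⟨c, hc⟩ := h
    refine ⟨c, ?_⟩
    push_cast at hc ⊢
    linear_combination 2 * hc

lemma padicDigit_one_add_two_mul_zero (x : ℤ_[2]) : padicDigit (1 + 2 * x) 0 = 1 := by
  unfold padicDigit
  rw [appr_one_add_two_mul]
  simp [Nat.testBit_zero]

lemma padicDigit_one_add_two_mul_succ (x : ℤ_[2]) (j : ℕ) :
    padicDigit (1 + 2 * x) (j + 1) = padicDigit x j := by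
  unfold padicDigit
  rw [appr_one_add_two_mul, Nat.testBit_succ]
  congr 3
  omega

/-- The product defining `binom2 x k` may be truncated anywhere beyond `k`, since the omitted
factors are `C(_, 0) = 1`. -/
lemma binom2_eq_prod_range (x : ℤ_[2]) (k N : ℕ) (h : k + 1 ≤ N) :
    binom2 x k = ∏ i ∈ Finset.range N,
      Nat.choose (padicDigit x i) (if k.testBit i then 1 else 0) := by
  unfold binom2
  refine Finset.prod_subset (Finset.range_mono h) fun i _ hi => ?_
  have hk : k < 2 ^ i := by
    have : k < i := by simpa using hi
    exact this.trans Nat.lt_two_pow_self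
  simp [Nat.testBit_lt_two_pow hk]

lemma binom2_one_add_two_mul (x : ℤ_[2]) (k : ℕ) :
    binom2 (1 + 2 * x) (1 + 2 * k) = binom2 x k := by
  rw [binom2_eq_prod_range x k (1 + 2 * k) (by omega), binom2, Finset.prod_range_succ',
    padicDigit_one_add_two_mul_zero]
  have hk : (1 + 2 * k) / 2 = k := by omega
  simp [padicDigit_one_add_two_mul_succ, Nat.testBit_succ, hk, Nat.testBit_zero]

lemma binom2_low_ones (x : ℤ_[2]) (k m : ℕ) :
    binom2 (2 ^ m - 1 + 2 ^ m * x) (2 ^ m - 1 + 2 ^ m * k) = binom2 x k := by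
  induction m with
  | zero => simp
  | succ m ih =>
    have h1 : (2 : ℤ_[2]) ^ (m + 1) - 1 + 2 ^ (m + 1) * x
        = 1 + 2 * (2 ^ m - 1 + 2 ^ m * x) := by ring
    have h2 : 2 ^ (m + 1) - 1 + 2 ^ (m + 1) * k = 1 + 2 * (2 ^ m - 1 + 2 ^ m * k) := by
      have := Nat.two_pow_pos m
      rw [pow_succ, mul_comm (2 ^ m) 2, mul_assoc]
      omega
    rw [h1, h2, binom2_one_add_two_mul, ih]

/-- Let `ω ≠ -1` be a 2-adic integer whose binary expansion starts with exactly
`ℓ` ones, so that `ω = 2^ℓ - 1 + 2^{ℓ+1}·ω'`, and set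
`f_ω(k) = (ω+k+1 choose 2k+1)₂`.  Then for every `k'`,
`f_ω(2^ℓ - 1 + 2^{ℓ+1}·k') = (ω' + k' choose 2k')₂`. -/
theorem binom2_shift_leading_ones (ω ω' : ℤ_[2]) (ℓ : ℕ)
    (hω : ω ≠ -1)
    (hones : ∀ i : ℕ, i < ℓ → padicDigit ω i = 1)
    (hzero : padicDigit ω ℓ = 0)
    (hdecomp : ω = 2 ^ ℓ - 1 + 2 ^ (ℓ + 1) * ω') :
    ∀ k' : ℕ,
      binom2 (ω + ((2 ^ ℓ - 1 + 2 ^ (ℓ + 1) * k' : ℕ) : ℤ_[2]) + 1)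
          (2 * (2 ^ ℓ - 1 + 2 ^ (ℓ + 1) * k') + 1)
        = binom2 (ω' + (k' : ℤ_[2])) (2 * k') := by
  intro k'
  have h1 : ω + ((2 ^ ℓ - 1 + 2 ^ (ℓ + 1) * k' : ℕ) : ℤ_[2]) + 1
      = 2 ^ (ℓ + 1) - 1 + 2 ^ (ℓ + 1) * (ω' + (k' : ℤ_[2])) := by
    rw [hdecomp]
    push_cast [Nat.one_le_two_pow]
    ring
  have h2 : 2 * (2 ^ ℓ - 1 + 2 ^ (ℓ + 1) * k') + 1
      = 2 ^ (ℓ + 1) - 1 + 2 ^ (ℓ + 1) * (2 * k') := by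
    have := Nat.two_pow_pos ℓ
    rw [mul_left_comm (2 ^ (ℓ + 1)) 2 k']
    have := pow_succ 2 ℓ
    omega
  rw [h1, h2, binom2_low_ones]
end
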